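/- arXiv:2110.06150 — 7 statements merged into one kernel-verified Lean document; each statement's English description precedes it below -/
import Mathlib

section
/- Let d, d_u, s_c, s_e be natural numbers with s_c + s_e ≤ d. Let A ∈ ℝ^{d×d} and B ∈ ℝ^{d×d_u}, and suppose there is an invertible T₁ ∈ ℝ^{d×d} such that T₁ A T₁⁻¹ has the block form [[A₁, X₂],[0, X₃]] with A₁ ∈ ℝ^{s_c×s_c}, X₂ ∈ ℝ^{s_c×(d−s_c)}, X₃ ∈ ℝ^{(d−s_c)×(d−s_c)}, and T₁ B = [B₁; 0] with B₁ ∈ ℝ^{s_c×d_u}. Suppose moreover that the relevant disturbances matrix RD = [X₂ᵀ, X₃ᵀX₂ᵀ, (X₃ᵀ)²X₂ᵀ, …, (X₃ᵀ)^{d−s_c}X₂ᵀ] has rank s_e. Then there exists an invertible T ∈ ℝ^{d×d} such that T A T⁻¹ and T B are in the PC-LQ block form with block sizes (s_c, s_e, d−s_c−s_e): T A T⁻¹ = [[A₁, A₁₂, 0],[0, A₂, 0],[0, A₃₂, A₃]] with A₂ ∈ ℝ^{s_e×s_e}, and T B = [B₁; 0; 0]. -/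
/-!
Row vectors are acted on by `X₃` from the right. Let `W` be the smallest subspace of row vectors
that contains the rows of `X₂` and is stable under `X₃`. By Cayley–Hamilton the powers of `X₃`
occurring in `RD` already generate it, so `W` is the column space of `RD` and has dimension `se`.
Choose an invertible `S` whose first `se` rows form a basis of `W`. Since `w ↦ w S⁻¹` computes
coordinates with respect to the rows of `S`, it sends `W` to the vectors supported on the first `se`
entries. Hence only the first `se` columns of `X₂ S⁻¹` can be nonzero, and likewise for the first
`se` rows of `S X₃ S⁻¹`. The transformation `T = diag(1, S) T₁` then has all required properties,
because `diag(1, S)` affects neither `A₁` nor `B₁`.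
-/

open Matrix Module Submodule

/-- The splitting of `Fin d` into its first `s` elements and the remaining `d - s`, the latter
numbered from `0`; it translates between matrices over `Fin d` and `2 × 2` block matrices. -/
def finSumSubEquiv {s d : ℕ} (h : s ≤ d) : Fin s ⊕ Fin (d - s) ≃ Fin d :=
  finSumFinEquiv.trans (finCongr (Nat.add_sub_cancel' h))

@[simp]
theorem finSumSubEquiv_inl {s d : ℕ} (h : s ≤ d) (i : Fin s) :
    finSumSubEquiv h (.inl i) = ⟨i, by omega⟩ := rfl

@[simp]
theorem finSumSubEquiv_inr {s d : ℕ} (h : s ≤ d) (i : Fin (d - s)) :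
    finSumSubEquiv h (.inr i) = ⟨s + i, by omega⟩ := rfl

section AdaptedBasis

theorem exists_basis_mem_iff_repr_eq_zero {K V : Type*} [Field K] [AddCommGroup V] [Module K V]
    [FiniteDimensional K V] {n : ℕ} (hV : finrank K V = n) (W : Submodule K V) :
    ∃ b : Basis (Fin n) K V, ∀ v, v ∈ W ↔ ∀ j : Fin n, finrank K W ≤ j → b.repr v j = 0 := by
  have hQ : finrank K (V ⧸ W) = n - finrank K W := by rw [← hV, finrank_quotient]
  let bQ := finBasisOfFinrankEq K (V ⧸ W) hQ
  let e := finSumSubEquiv (hV ▸ W.finrank_le)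
  refine ⟨((finBasis K W).sumQuot bQ).reindex e, fun v ↦ ?_⟩
  rw [← Quotient.mk_eq_zero, ← mkQ_apply, bQ.ext_elem_iff]
  simp [← e.forall_congr_right, e, Sum.forall]

section CommRing

variable {R n : Type*} [CommRing R] [Fintype n] [DecidableEq n] (b : Basis n R (n → R))

theorem isUnit_det_of_basis : IsUnit (of b).det := by
  rw [← Pi.basisFun_det_apply]
  exact (Pi.basisFun R n).isUnit_det b

theorem vecMul_inv_of_basis (w : n → R) : w ᵥ* (of b)⁻¹ = b.repr w := by
  have hw : b.repr w ᵥ* of b = w := by rw [vecMul_eq_sum]; exact b.sum_repr w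
  calc w ᵥ* (of b)⁻¹ = b.repr w ᵥ* of b ᵥ* (of b)⁻¹ := by rw [hw]
    _ = b.repr w := by rw [vecMul_vecMul, mul_nonsing_inv _ (isUnit_det_of_basis b), vecMul_one]

end CommRing

theorem exists_isUnit_det_mem_iff_vecMul_inv_eq_zero {K : Type*} [Field K] {n : ℕ}
    (W : Submodule K (Fin n → K)) :
    ∃ S : Matrix (Fin n) (Fin n) K, IsUnit S.det ∧
      ∀ w, w ∈ W ↔ ∀ j : Fin n, finrank K W ≤ j → (w ᵥ* S⁻¹) j = 0 := by
  obtain ⟨b, hb⟩ := exists_basis_mem_iff_repr_eq_zero (finrank_fin_fun K) W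
  exact ⟨of b, isUnit_det_of_basis b, by simpa only [vecMul_inv_of_basis] using hb⟩

end AdaptedBasis

section RelevantSubspace

theorem pow_mem_span_range_pow_of_aeval_eq_zero {R A : Type*} [CommRing R] [Ring A] [Algebra R A]
    {a : A} {f : Polynomial R} (hf : f.Monic) (hfa : Polynomial.aeval a f = 0) {N : ℕ}
    (hN : f.natDegree ≤ N) (k : ℕ) : a ^ k ∈ span R (Set.range fun j : Fin N ↦ a ^ (j : ℕ)) := by
  classical
  have hk : a ^ k ∈ Subalgebra.toSubmodule (Algebra.adjoin R {a}) :=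
    pow_mem (Algebra.self_mem_adjoin_singleton R a) k
  rw [← span_range_natDegree_eq_adjoin hf hfa] at hk
  refine span_mono (fun x hx ↦ ?_) hk
  obtain ⟨j, hj, rfl⟩ := Finset.mem_image.1 hx
  exact ⟨⟨j, (Finset.mem_range.1 hj).trans_le hN⟩, rfl⟩

variable {R m n : Type*} [CommRing R] [Fintype n] [DecidableEq n]

/-- The smallest subspace of row vectors that contains the rows of `X₂` and is stable under right
multiplication by `X₃`, i.e. the row space of the observability matrix of the pair `(X₂, X₃)`. -/
def relevantSubspace (X₂ : Matrix m n R) (X₃ : Matrix n n R) : Submodule R (n → R) :=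
  span R (Set.range fun p : ℕ × m ↦ (X₂ * X₃ ^ p.1) p.2)

/-- The relevant disturbances matrix `[X₂ᵀ, X₃ᵀX₂ᵀ, …, (X₃ᵀ)^(N-1) X₂ᵀ]` with `N` blocks; a column
index consists of the number of the block and the column within it. -/
def relevantDisturbances (X₂ : Matrix m n R) (X₃ : Matrix n n R) (N : ℕ) :
    Matrix n (Fin N × m) R :=
  of fun i p ↦ (X₃ᵀ ^ (p.1 : ℕ) * X₂ᵀ) i p.2

variable (X₂ : Matrix m n R) (X₃ : Matrix n n R)

theorem row_mem_relevantSubspace (i : m) : X₂ i ∈ relevantSubspace X₂ X₃ :=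
  subset_span ⟨(0, i), by simp⟩

theorem vecMul_mem_relevantSubspace {w : n → R} (hw : w ∈ relevantSubspace X₂ X₃) :
    w ᵥ* X₃ ∈ relevantSubspace X₂ X₃ := by
  suffices relevantSubspace X₂ X₃ ≤ (relevantSubspace X₂ X₃).comap X₃.vecMulLinear from this hw
  refine span_le.2 ?_
  rintro _ ⟨⟨k, i⟩, rfl⟩
  exact subset_span ⟨(k + 1, i), by simp [pow_succ, mul_apply_eq_vecMul]⟩

theorem col_relevantDisturbances {N : ℕ} (p : Fin N × m) :
    (relevantDisturbances X₂ X₃ N).col p = (X₂ * X₃ ^ (p.1 : ℕ)) p.2 := by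
  ext i
  simp [relevantDisturbances, ← transpose_pow, ← transpose_mul]

theorem span_range_col_relevantDisturbances {N : ℕ} (hN : Fintype.card n ≤ N) :
    span R (Set.range (relevantDisturbances X₂ X₃ N).col) = relevantSubspace X₂ X₃ := by
  nontriviality R
  refine le_antisymm (span_le.2 ?_) (span_le.2 ?_)
  · rintro _ ⟨⟨j, i⟩, rfl⟩
    exact subset_span ⟨(j, i), (col_relevantDisturbances X₂ X₃ (j, i)).symm⟩
  · rintro _ ⟨⟨k, i⟩, rfl⟩
    have hpow : X₃ ^ k ∈ span R (Set.range fun j : Fin N ↦ X₃ ^ (j : ℕ)) :=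
      pow_mem_span_range_pow_of_aeval_eq_zero X₃.charpoly_monic X₃.aeval_self_charpoly
        (X₃.charpoly_natDegree_eq_dim.trans_le hN) k
    have hspan : span R (Set.range fun j : Fin N ↦ X₃ ^ (j : ℕ)) ≤
        (span R (Set.range (relevantDisturbances X₂ X₃ N).col)).comap (vecMulBilin R R (X₂ i)) := by
      refine span_le.2 ?_
      rintro _ ⟨j, rfl⟩
      exact subset_span ⟨(j, i), col_relevantDisturbances X₂ X₃ (j, i)⟩
    exact hspan hpow

theorem finrank_relevantSubspace [Fintype m] {N : ℕ} (hN : Fintype.card n ≤ N) :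
    finrank R (relevantSubspace X₂ X₃) = (relevantDisturbances X₂ X₃ N).rank := by
  rw [rank_eq_finrank_span_cols, span_range_col_relevantDisturbances X₂ X₃ hN]

end RelevantSubspace

theorem exists_observability_decomposition {K m : Type*} [Field K] {n : ℕ}
    (X₂ : Matrix m (Fin n) K) (X₃ : Matrix (Fin n) (Fin n) K) :
    ∃ S : Matrix (Fin n) (Fin n) K, IsUnit S.det ∧
      (∀ i, ∀ j : Fin n, finrank K (relevantSubspace X₂ X₃) ≤ j → (X₂ * S⁻¹) i j = 0) ∧
      ∀ i j : Fin n, i < finrank K (relevantSubspace X₂ X₃) →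
        finrank K (relevantSubspace X₂ X₃) ≤ j → (S * X₃ * S⁻¹) i j = 0 := by
  obtain ⟨S, hS, hmem⟩ := exists_isUnit_det_mem_iff_vecMul_inv_eq_zero (relevantSubspace X₂ X₃)
  have hrow (i : Fin n) (hi : i < finrank K (relevantSubspace X₂ X₃)) :
      S i ∈ relevantSubspace X₂ X₃ := by
    refine (hmem _).2 fun j hj ↦ ?_
    rw [← mul_apply_eq_vecMul, mul_nonsing_inv _ hS, one_apply_ne (by omega)]
  exact ⟨S, hS, fun i ↦ (hmem _).1 (row_mem_relevantSubspace X₂ X₃ i),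
    fun i j hi ↦ (hmem _).1 (vecMul_mem_relevantSubspace X₂ X₃ (hrow i hi)) j⟩

section LowerBlockTransform

variable {R m n q : Type*} [CommRing R] [DecidableEq m]

/-- The change of coordinates `diag(1, S)`, as a matrix over an index type `q` that `e` splits into
two blocks; it transforms only the second block of coordinates. -/
def lowerBlockTransform (e : m ⊕ n ≃ q) (S : Matrix n n R) : Matrix q q R :=
  (fromBlocks 1 0 0 S).submatrix e.symm e.symm

variable [Finite m] [Fintype q]

theorem lowerBlockTransform_mul_eq_self [Finite n] {p : Type*} (e : m ⊕ n ≃ q) (S : Matrix n n R)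
    {Y : Matrix q p R} (hY : ∀ j k, Y (e (.inr j)) k = 0) : lowerBlockTransform e S * Y = Y := by
  cases nonempty_fintype m
  cases nonempty_fintype n
  have hblocks : Y = (fromRows (of fun i k ↦ Y (e (.inl i)) k) 0).submatrix e.symm id := by
    ext i k
    obtain ⟨i | j, rfl⟩ := e.surjective i <;> simp [hY]
  rw [hblocks, lowerBlockTransform, submatrix_mul_equiv, fromBlocks_mul_fromRows]
  simp

variable [Fintype n] [DecidableEq n] [DecidableEq q] (e : m ⊕ n ≃ q) {S : Matrix n n R}

theorem isUnit_det_lowerBlockTransform (hS : IsUnit S.det) :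
    IsUnit (lowerBlockTransform e S).det := by
  cases nonempty_fintype m
  simpa [lowerBlockTransform] using hS

theorem inv_lowerBlockTransform (hS : IsUnit S.det) :
    (lowerBlockTransform e S)⁻¹ = lowerBlockTransform e S⁻¹ := by
  cases nonempty_fintype m
  refine inv_eq_right_inv ?_
  simp [lowerBlockTransform, submatrix_mul_equiv, fromBlocks_multiply, mul_nonsing_inv _ hS]

theorem lowerBlockTransform_conj_submatrix (hS : IsUnit S.det) {M : Matrix q q R}
    {X₁ : Matrix m m R} {X₂ : Matrix m n R} {X₄ : Matrix n m R} {X₃ : Matrix n n R}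
    (hM : M.submatrix e e = fromBlocks X₁ X₂ X₄ X₃) :
    (lowerBlockTransform e S * M * (lowerBlockTransform e S)⁻¹).submatrix e e =
      fromBlocks X₁ (X₂ * S⁻¹) (S * X₄) (S * X₃ * S⁻¹) := by
  cases nonempty_fintype m
  rw [inv_lowerBlockTransform e hS, ← submatrix_mul_equiv _ _ _ e, ← submatrix_mul_equiv _ _ _ e,
    hM]
  simp [lowerBlockTransform, fromBlocks_multiply]

end LowerBlockTransform

theorem stmt_4_general {K : Type*} [Field K] {d du sc se : ℕ} (hsc : sc ≤ d)
    (A : Matrix (Fin d) (Fin d) K) (B : Matrix (Fin d) (Fin du) K)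
    (T₁ : Matrix (Fin d) (Fin d) K) (hT₁ : IsUnit T₁.det)
    (M : Matrix (Fin d) (Fin d) K) (hM : M = T₁ * A * T₁⁻¹)
    (hlow : ∀ i j : Fin d, sc ≤ (i : ℕ) → (j : ℕ) < sc → M i j = 0)
    (hB : ∀ (i : Fin d) (k : Fin du), sc ≤ (i : ℕ) → (T₁ * B) i k = 0)
    (X₂ : Matrix (Fin sc) (Fin (d - sc)) K)
    (hX₂ : ∀ (i : Fin sc) (j : Fin (d - sc)),
      X₂ i j = M ⟨i, by omega⟩ ⟨sc + (j : ℕ), by omega⟩)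
    (X₃ : Matrix (Fin (d - sc)) (Fin (d - sc)) K)
    (hX₃ : ∀ i j : Fin (d - sc),
      X₃ i j = M ⟨sc + (i : ℕ), by omega⟩ ⟨sc + (j : ℕ), by omega⟩)
    (RD : Matrix (Fin (d - sc)) (Fin (d - sc + 1) × Fin sc) K)
    (hRD : ∀ (i : Fin (d - sc)) (p : Fin (d - sc + 1) × Fin sc),
      RD i p = (X₃.transpose ^ (p.1 : ℕ) * X₂.transpose) i p.2)
    (hrank : RD.rank = se) :
    ∃ T : Matrix (Fin d) (Fin d) K, IsUnit T.det ∧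
      (∀ i j : Fin d, sc ≤ (i : ℕ) → (j : ℕ) < sc → (T * A * T⁻¹) i j = 0) ∧
      (∀ i j : Fin d, (i : ℕ) < sc + se → sc + se ≤ (j : ℕ) → (T * A * T⁻¹) i j = 0) ∧
      (∀ (i : Fin d) (k : Fin du), sc ≤ (i : ℕ) → (T * B) i k = 0) ∧
      (∀ i j : Fin d, (i : ℕ) < sc → (j : ℕ) < sc → (T * A * T⁻¹) i j = M i j) ∧
      (∀ (i : Fin d) (k : Fin du), (i : ℕ) < sc → (T * B) i k = (T₁ * B) i k) := by
  obtain ⟨S, hS, hX₂S, hX₃S⟩ := exists_observability_decomposition X₂ X₃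
  have hse : finrank K (relevantSubspace X₂ X₃) = se := by
    rw [finrank_relevantSubspace X₂ X₃ (N := d - sc + 1) (by simp), ← hrank]
    exact congrArg Matrix.rank (Matrix.ext hRD).symm
  rw [hse] at hX₂S hX₃S
  let e := finSumSubEquiv hsc
  let P := lowerBlockTransform e S
  have hM_blocks : M.submatrix e e = fromBlocks (M.submatrix e e).toBlocks₁₁ X₂ 0 X₃ := by
    ext (i | i) (j | j) <;> simp [e, hX₂, hX₃, hlow, toBlocks₁₁]
  have hconj : P * T₁ * A * (P * T₁)⁻¹ = P * M * P⁻¹ := by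
    rw [hM, Matrix.mul_inv_rev]
    simp only [Matrix.mul_assoc]
  have hentry (x y : Fin sc ⊕ Fin (d - sc)) : (P * T₁ * A * (P * T₁)⁻¹) (e x) (e y) =
      fromBlocks (M.submatrix e e).toBlocks₁₁ (X₂ * S⁻¹) 0 (S * X₃ * S⁻¹) x y := by
    rw [hconj, ← S.mul_zero, ← lowerBlockTransform_conj_submatrix e hS hM_blocks, submatrix_apply]
  have hTB : P * T₁ * B = T₁ * B := by
    rw [Matrix.mul_assoc]
    exact lowerBlockTransform_mul_eq_self e S fun j k ↦ hB _ k (by simp [e])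
  refine ⟨P * T₁, ?_, ?_, ?_, ?_, ?_, ?_⟩
  · rw [det_mul]
    exact (isUnit_det_lowerBlockTransform e hS).mul hT₁
  · simp only [← e.forall_congr_right, Sum.forall, hentry]
    simp [e]
  · simp only [← e.forall_congr_right, Sum.forall, hentry]
    simp only [e, finSumSubEquiv_inl, finSumSubEquiv_inr, Nat.add_lt_add_iff_left,
      Nat.add_le_add_iff_left, fromBlocks_apply₁₂, fromBlocks_apply₂₁, fromBlocks_apply₂₂]
    exact ⟨fun i ↦ ⟨fun j _ hj ↦ by omega, fun j _ ↦ hX₂S i j⟩,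
      fun i ↦ ⟨fun j _ _ ↦ rfl, hX₃S i⟩⟩
  · simpa only [hTB] using hB
  · simp only [← e.forall_congr_right, Sum.forall, hentry]
    simp [e, toBlocks₁₁]
  · simp only [hTB, implies_true]

/-- Suppose an invertible `T₁` puts `(A, B)` in the partially-controllable
block form `T₁ A T₁⁻¹ = [[A₁, X₂], [0, X₃]]`, `T₁ B = [B₁; 0]` with first block of size `sc`,
and the relevant disturbances matrix `RD = [X₂ᵀ, X₃ᵀX₂ᵀ, …, (X₃ᵀ)^{d-sc} X₂ᵀ]` has rank `se`.
Then there is an invertible `T` putting `(A, B)` in PC-LQ block form with block sizes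
`(sc, se, d - sc - se)`, keeping the same blocks `A₁` and `B₁`. -/
theorem stmt_4 {d du sc se : ℕ} (hd : sc + se ≤ d)
    (A : Matrix (Fin d) (Fin d) ℝ) (B : Matrix (Fin d) (Fin du) ℝ)
    (T₁ : Matrix (Fin d) (Fin d) ℝ) (hT₁ : IsUnit T₁.det)
    (M : Matrix (Fin d) (Fin d) ℝ) (hM : M = T₁ * A * T₁⁻¹)
    -- the lower-left block of `T₁ A T₁⁻¹` is zero
    (hlow : ∀ i j : Fin d, sc ≤ (i : ℕ) → (j : ℕ) < sc → M i j = 0)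
    -- the lower block of `T₁ B` is zero
    (hB : ∀ (i : Fin d) (k : Fin du), sc ≤ (i : ℕ) → (T₁ * B) i k = 0)
    -- `X₂` is the upper-right block and `X₃` the lower-right block of `T₁ A T₁⁻¹`
    (X₂ : Matrix (Fin sc) (Fin (d - sc)) ℝ)
    (hX₂ : ∀ (i : Fin sc) (j : Fin (d - sc)),
      X₂ i j = M ⟨i, by omega⟩ ⟨sc + (j : ℕ), by omega⟩)
    (X₃ : Matrix (Fin (d - sc)) (Fin (d - sc)) ℝ)
    (hX₃ : ∀ i j : Fin (d - sc),
      X₃ i j = M ⟨sc + (i : ℕ), by omega⟩ ⟨sc + (j : ℕ), by omega⟩)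
    -- the relevant disturbances matrix `RD = [X₂ᵀ, X₃ᵀX₂ᵀ, …, (X₃ᵀ)^{d-sc} X₂ᵀ]`
    (RD : Matrix (Fin (d - sc)) (Fin (d - sc + 1) × Fin sc) ℝ)
    (hRD : ∀ (i : Fin (d - sc)) (p : Fin (d - sc + 1) × Fin sc),
      RD i p = (X₃.transpose ^ (p.1 : ℕ) * X₂.transpose) i p.2)
    (hrank : RD.rank = se) :
    ∃ T : Matrix (Fin d) (Fin d) ℝ, IsUnit T.det ∧
      -- `T A T⁻¹` is in PC-LQ block form with block sizes `(sc, se, d - sc - se)`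
      (∀ i j : Fin d, sc ≤ (i : ℕ) → (j : ℕ) < sc → (T * A * T⁻¹) i j = 0) ∧
      (∀ i j : Fin d, (i : ℕ) < sc + se → sc + se ≤ (j : ℕ) → (T * A * T⁻¹) i j = 0) ∧
      (∀ (i : Fin d) (k : Fin du), sc ≤ (i : ℕ) → (T * B) i k = 0) ∧
      -- with the same first diagonal block `A₁` and the same first block `B₁` of `T₁ B`
      (∀ i j : Fin d, (i : ℕ) < sc → (j : ℕ) < sc → (T * A * T⁻¹) i j = M i j) ∧
      (∀ (i : Fin d) (k : Fin du), (i : ℕ) < sc → (T * B) i k = (T₁ * B) i k) := by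
  exact stmt_4_general (by omega) A B T₁ hT₁ M hM hlow hB X₂ hX₂ X₃ hX₃ RD hRD hrank
end

section
/- Let d, d_u, s_c, s be natural numbers with s_c ≤ s ≤ d, let A ∈ ℝ^{d×d} and B ∈ ℝ^{d×d_u}. The following are equivalent. (i) There exist orthogonal projection matrices P_c and P_r in ℝ^{d×d} such that: the column span of B is contained in the range of P_c, the range of P_c is contained in the range of P_r, rank(P_c) = s_c, rank(P_r) = s, A P_c = P_c A P_c (the range of P_c is A-invariant), (I − P_c)Aᵀ P_r = P_r (I − P_c)Aᵀ P_r (the range of P_r is invariant under (I − P_c)Aᵀ), and A = P_c A P_c + P_r A (P_r − P_c) + (I − P_r) A (I − P_c). (ii) There exists an orthogonal matrix U ∈ ℝ^{d×d} such that U A Uᵀ and U B are in the PC-LQ block form with block sizes (s_c, s − s_c, d − s): U A Uᵀ = [[A₁, A₁₂, 0],[0, A₂, 0],[0, A₃₂, A₃]] with A₁ ∈ ℝ^{s_c×s_c}, A₂ ∈ ℝ^{(s−s_c)×(s−s_c)}, and U B = [B₁; 0; 0] with B₁ ∈ ℝ^{s_c×d_u}. -/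
/-!
If `P ≤ Q` are nested orthogonal projections, then `P + Q` has spectrum in `{0, 1, 2}` and
`2 P = (P + Q)² - (P + Q)`. Hence a unitary diagonalization of `P + Q` with decreasing eigenvalues
turns `P` and `Q` simultaneously into coordinate projections onto initial segments, and then each
of the conditions `P A P = A P`, `Q A Q = Q A`, `P B = B` says that a block vanishes. Once
`P A P = A P`, the remaining conditions on `(P, Q)` amount to `Q A Q = Q A`.
-/

open Matrix Unitary

section StarRing

variable {R : Type*} [Ring R] [StarRing R] {p q : R}

lemma projection_decomposition_iff_mul_mul_eq (hq : IsSelfAdjoint q) (hqp : q * p = p) {a : R}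
    (ha : p * (a * p) = a * p) :
    ((1 - p) * star a * q = q * ((1 - p) * star a * q) ∧
        a = p * a * p + q * a * (q - p) + (1 - q) * a * (1 - p)) ↔
      q * a * q = q * a := by
  have expand : p * a * p + q * a * (q - p) + (1 - q) * a * (1 - p) =
      a + (p * (a * p) - a * p) + (q * a * q - q * a) := by
    noncomm_ring
  rw [expand, ha, sub_self, add_zero, left_eq_add, sub_eq_zero]
  refine ⟨And.right, fun h => ⟨?_, h⟩⟩
  have hstar : q * star a * q = star a * q := by
    simpa only [star_mul, hq.star_eq, mul_assoc] using congrArg star h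
  calc (1 - p) * star a * q = star a * q - p * (star a * q) := by noncomm_ring
    _ = q * star a * q - q * p * (star a * q) := by rw [hstar, hqp]
    _ = q * ((1 - p) * star a * q) := by noncomm_ring

lemma two_nsmul_eq_add_mul_add_sub_add (hp : IsStarProjection p) (hq : IsStarProjection q)
    (hqp : q * p = p) : 2 • p = (p + q) * (p + q) - (p + q) := by
  have hpq : p * q = p := by
    simpa only [star_mul, hp.isSelfAdjoint.star_eq, hq.isSelfAdjoint.star_eq] using
      congrArg star hqp
  rw [add_mul, mul_add, mul_add, hp.isIdempotentElem.eq, hq.isIdempotentElem.eq, hpq, hqp]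
  abel

end StarRing

lemma isLowerSet_of_antitone_indicator_add {α : Type*} [Preorder α] {S T : Set α} (hST : S ⊆ T)
    (h : Antitone (S.indicator 1 + T.indicator 1 : α → ℝ)) : IsLowerSet S ∧ IsLowerSet T := by
  constructor <;> intro i j hji hi <;> by_contra hj <;> have hij := h hji
  · have hjT : T.indicator (1 : α → ℝ) j ≤ 1 := Set.indicator_le_self' (by simp) j
    simp only [Pi.add_apply, Set.indicator_of_mem hi, Set.indicator_of_mem (hST hi),
      Set.indicator_of_notMem hj, Pi.one_apply] at hij
    linarith
  · have hiS : 0 ≤ S.indicator (1 : α → ℝ) i := Set.indicator_nonneg (by simp) i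
    simp only [Pi.add_apply, Set.indicator_of_mem hi, Set.indicator_of_notMem hj,
      Set.indicator_of_notMem (mt (@hST j) hj), Pi.one_apply] at hij
    linarith

lemma setOf_val_lt_ncard_of_isLowerSet {d : ℕ} {S : Set (Fin d)} (hS : IsLowerSet S) :
    {i : Fin d | (i : ℕ) < S.ncard} = S := by
  obtain rfl | ⟨a, rfl⟩ := hS.eq_univ_or_Iio
  · ext i
    simp
  · ext i
    simp [Set.ncard_eq_toFinset_card']

lemma ncard_setOf_val_lt {d k : ℕ} (hk : k ≤ d) : {i : Fin d | (i : ℕ) < k}.ncard = k := by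
  simp [Set.ncard_eq_toFinset_card', Fin.card_filter_val_lt, hk]

section CoordProj

variable {m n R : Type*} [DecidableEq n]

/-- The coordinate projection onto the span of the standard basis vectors indexed by `S`. -/
noncomputable def coordProj (R : Type*) [Zero R] [One R] (S : Set n) : Matrix n n R :=
  diagonal (S.indicator 1)

lemma isStarProjection_coordProj [Fintype n] [Semiring R] [StarRing R] (S : Set n) :
    IsStarProjection (coordProj R S) := by
  refine isStarProjection_iff'.2 ⟨?_, ?_⟩
  · rw [coordProj, diagonal_mul_diagonal']
    congr 1
    ext i
    by_cases hi : i ∈ S <;> simp [hi]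
  · rw [coordProj, star_eq_conjTranspose, diagonal_conjTranspose]
    congr 1
    ext i
    by_cases hi : i ∈ S <;> simp [hi]

lemma rank_coordProj [Fintype n] [Field R] (S : Set n) : (coordProj R S).rank = S.ncard := by
  classical
  rw [coordProj, rank_diagonal, Set.ncard_eq_toFinset_card', Set.toFinset_card]
  exact Fintype.card_congr (Equiv.subtypeEquivRight fun i => by simp)

lemma coordProj_mul_eq_self_iff [Fintype n] [Semiring R] [Nontrivial R] {S : Set n}
    {B : Matrix n m R} : coordProj R S * B = B ↔ ∀ i j, i ∉ S → B i j = 0 := by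
  rw [← Matrix.ext_iff]
  refine forall₂_congr fun i j => ?_
  by_cases hi : i ∈ S <;> simp [coordProj, hi, eq_comm]

lemma coordProj_mul_coordProj_eq_right_iff [Fintype n] [Semiring R] [Nontrivial R] {S T : Set n} :
    coordProj R T * coordProj R S = coordProj R S ↔ S ⊆ T := by
  rw [coordProj_mul_eq_self_iff]
  refine ⟨fun h i hS => ?_, fun h i j hi => ?_⟩
  · by_contra hT
    simpa [coordProj, hS] using h i i hT
  · rcases eq_or_ne i j with rfl | hij
    · simp [coordProj, mt (@h i) hi]
    · exact diagonal_apply_ne _ hij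

lemma exists_eq_coordProj_of_isIdempotentElem_diagonal [Fintype n] [Ring R] [IsDomain R]
    {v : n → R} (hv : IsIdempotentElem (diagonal v)) : ∃ S : Set n, diagonal v = coordProj R S := by
  refine ⟨{i | v i = 1}, congrArg diagonal (funext fun i => ?_)⟩
  have hvi : IsIdempotentElem (v i) := by
    simpa only [diagonal_mul_diagonal, diagonal_apply_eq] using! congrFun₂ hv.eq i i
  by_cases hi : v i = 1
  · simp [hi]
  · simp [(IsIdempotentElem.iff_eq_zero_or_one.1 hvi).resolve_right hi]

end CoordProj

lemma range_mulVecLin_le_range_mulVecLin_iff {m n R : Type*} [Fintype m] [Fintype n]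
    [CommSemiring R] {P : Matrix n n R} (hP : IsIdempotentElem P) {B : Matrix n m R} :
    LinearMap.range B.mulVecLin ≤ LinearMap.range P.mulVecLin ↔ P * B = B := by
  classical
  have hPlin : IsIdempotentElem P.mulVecLin := by
    rw [IsIdempotentElem, Module.End.mul_eq_comp, ← mulVecLin_mul, hP.eq]
  rw [← LinearMap.IsIdempotentElem.comp_eq_right_iff hPlin, ← mulVecLin_mul]
  exact toLin'.injective.eq_iff

lemma rank_conjStarAlgAut {n R : Type*} [Fintype n] [DecidableEq n] [CommRing R] [StarRing R]
    (U : unitaryGroup n R) (A : Matrix n n R) : (conjStarAlgAut R _ U A).rank = A.rank := by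
  rw [conjStarAlgAut_apply, rank_mul_eq_left_of_isUnit_det, rank_mul_eq_right_of_isUnit_det]
  · exact UnitaryGroup.det_isUnit U
  · exact UnitaryGroup.det_isUnit (star U)

lemma permMatrix_mem_unitaryGroup {n : Type*} (R : Type*) [Fintype n] [DecidableEq n] [CommRing R]
    [StarRing R] (σ : Equiv.Perm n) : σ.permMatrix R ∈ unitaryGroup n R := by
  rw [mem_unitaryGroup_iff, star_eq_conjTranspose, conjTranspose_permMatrix, ← permMatrix_mul,
    inv_mul_cancel, permMatrix_one]

lemma permMatrix_mul_diagonal_mul_star {n R : Type*} [Fintype n] [DecidableEq n] [CommRing R]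
    [StarRing R] (σ : Equiv.Perm n) (v : n → R) :
    σ.permMatrix R * diagonal v * star (σ.permMatrix R) = diagonal (v ∘ σ) := by
  rw [star_eq_conjTranspose, conjTranspose_permMatrix, PEquiv.toMatrix_toPEquiv_mul,
    PEquiv.mul_toMatrix_toPEquiv, submatrix_submatrix]
  exact submatrix_diagonal_equiv v σ

section Diagonalization

variable {𝕜 : Type*} [RCLike 𝕜] {d : ℕ}

lemma exists_unitary_conj_eq_diagonal_antitone {M : Matrix (Fin d) (Fin d) 𝕜}
    (hM : M.IsHermitian) :
    ∃ (U : unitaryGroup (Fin d) 𝕜) (f : Fin d → ℝ), Antitone f ∧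
      conjStarAlgAut 𝕜 _ U M = diagonal (RCLike.ofReal ∘ f) := by
  let σ := Tuple.sort (OrderDual.toDual ∘ hM.eigenvalues)
  have hσ : Monotone ((OrderDual.toDual ∘ hM.eigenvalues) ∘ σ) := Tuple.monotone_sort _
  refine ⟨⟨σ.permMatrix 𝕜, permMatrix_mem_unitaryGroup 𝕜 σ⟩ * star hM.eigenvectorUnitary,
    hM.eigenvalues ∘ σ, fun i j hij => hσ hij, ?_⟩
  rw [conjStarAlgAut_mul_apply, hM.conjStarAlgAut_star_eigenvectorUnitary]
  exact permMatrix_mul_diagonal_mul_star σ _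

lemma exists_unitary_conj_eq_coordProj {P Q : Matrix (Fin d) (Fin d) 𝕜}
    (hP : IsStarProjection P) (hQ : IsStarProjection Q) (hQP : Q * P = P) :
    ∃ U : unitaryGroup (Fin d) 𝕜,
      conjStarAlgAut 𝕜 _ U P = coordProj 𝕜 {i : Fin d | (i : ℕ) < P.rank} ∧
      conjStarAlgAut 𝕜 _ U Q = coordProj 𝕜 {i : Fin d | (i : ℕ) < Q.rank} := by
  obtain ⟨U, f, hf, hsum⟩ :=
    exists_unitary_conj_eq_diagonal_antitone (hP.isSelfAdjoint.add hQ.isSelfAdjoint)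
  set φ := conjStarAlgAut 𝕜 _ U
  obtain ⟨S, hS⟩ : ∃ S : Set (Fin d), φ P = coordProj 𝕜 S := by
    have hdiag : φ P = diagonal fun i => ((f i : 𝕜) * f i - f i) / 2 := by
      have h := congrArg φ (two_nsmul_eq_add_mul_add_sub_add hP hQ hQP)
      rw [map_nsmul, map_sub, map_mul, hsum, diagonal_mul_diagonal, diagonal_sub, two_nsmul,
        ← two_smul 𝕜] at h
      rw [← inv_smul_smul₀ (two_ne_zero' 𝕜) (φ P), h, ← diagonal_smul]
      exact congrArg diagonal (funext fun i => inv_mul_eq_div _ _)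
    exact hdiag ▸ exists_eq_coordProj_of_isIdempotentElem_diagonal
      (hdiag ▸ (hP.map φ).isIdempotentElem)
  obtain ⟨T, hT⟩ : ∃ T : Set (Fin d), φ Q = coordProj 𝕜 T := by
    have hdiag : φ Q = diagonal fun i => (f i : 𝕜) - S.indicator 1 i := by
      rw [map_add, ← eq_sub_iff_add_eq', hS, coordProj, diagonal_sub] at hsum
      exact hsum
    exact hdiag ▸ exists_eq_coordProj_of_isIdempotentElem_diagonal
      (hdiag ▸ (hQ.map φ).isIdempotentElem)
  have hST : S ⊆ T := by
    rw [← coordProj_mul_coordProj_eq_right_iff (R := 𝕜), ← hS, ← hT, ← map_mul, hQP]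
  have hfST : f = S.indicator 1 + T.indicator 1 := by
    classical
    rw [map_add, hS, hT, coordProj, coordProj, diagonal_add] at hsum
    ext i
    have hi : S.indicator 1 i + T.indicator 1 i = (f i : 𝕜) :=
      congrFun (diagonal_injective hsum) i
    apply RCLike.ofReal_injective (K := 𝕜)
    simpa [Set.indicator_apply, apply_ite (RCLike.ofReal : ℝ → 𝕜)] using hi.symm
  obtain ⟨hSlower, hTlower⟩ := isLowerSet_of_antitone_indicator_add hST (hfST ▸ hf)
  refine ⟨U, ?_, ?_⟩
  · rw [← rank_conjStarAlgAut U P, hS, rank_coordProj, setOf_val_lt_ncard_of_isLowerSet hSlower]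
  · rw [← rank_conjStarAlgAut U Q, hT, rank_coordProj, setOf_val_lt_ncard_of_isLowerSet hTlower]

end Diagonalization

section PCLQ

variable {m n R : Type*} [Fintype n] [DecidableEq n]

/-- The pair `(P, Q)` exhibits the PC-LQ structure of `(A, B)`: the range of `P` is `A`-invariant
and contains the columns of `B`, and `Q A Q = Q A`, i.e. (for idempotent `P` and `Q`) the kernel of
`Q` is `A`-invariant. When `P` and `Q` are coordinate projections this is the PC-LQ block form. -/
def IsPCLQPair [Semiring R] (A : Matrix n n R) (B : Matrix n m R) (P Q : Matrix n n R) : Prop :=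
  P * (A * P) = A * P ∧ Q * A * Q = Q * A ∧ P * B = B

lemma isPCLQPair_coordProj_iff [Semiring R] [Nontrivial R] {A : Matrix n n R} {B : Matrix n m R}
    {S T : Set n} :
    IsPCLQPair A B (coordProj R S) (coordProj R T) ↔
      (∀ i j, i ∉ S → j ∈ S → A i j = 0) ∧ (∀ i j, i ∈ T → j ∉ T → A i j = 0) ∧
        ∀ i k, i ∉ S → B i k = 0 := by
  classical
  have hS : coordProj R S * (A * coordProj R S) = A * coordProj R S ↔
      ∀ i j, i ∉ S → j ∈ S → A i j = 0 := by
    rw [coordProj_mul_eq_self_iff]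
    simp [coordProj, Set.indicator_apply]
  have hT : coordProj R T * A * coordProj R T = coordProj R T * A ↔
      ∀ i j, i ∈ T → j ∉ T → A i j = 0 := by
    rw [← Matrix.ext_iff]
    refine forall₂_congr fun i j => ?_
    by_cases hi : i ∈ T <;> by_cases hj : j ∈ T <;> simp [coordProj, hi, hj, eq_comm]
  exact and_congr hS (and_congr hT coordProj_mul_eq_self_iff)

lemma isPCLQPair_conjStarAlgAut_iff [CommRing R] [StarRing R] (U : unitaryGroup n R)
    {A P Q : Matrix n n R} {B : Matrix n m R} :
    IsPCLQPair (conjStarAlgAut R _ U A) ((U : Matrix n n R) * B)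
        (conjStarAlgAut R _ U P) (conjStarAlgAut R _ U Q) ↔
      IsPCLQPair A B P Q := by
  set φ := conjStarAlgAut R _ U
  have hB : φ P * ((U : Matrix n n R) * B) = (U : Matrix n n R) * B ↔ P * B = B := by
    have hPB : φ P * ((U : Matrix n n R) * B) = (U : Matrix n n R) * (P * B) := by
      rw [conjStarAlgAut_apply, Matrix.mul_assoc, ← Matrix.mul_assoc _ _ B, coe_star_mul_self,
        Matrix.one_mul, Matrix.mul_assoc]
    rw [hPB]
    exact (mul_right_injective_of_inv _ _ (coe_star_mul_self U)).eq_iff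
  have hA : φ P * (φ A * φ P) = φ A * φ P ↔ P * (A * P) = A * P := by
    simp only [← map_mul, EmbeddingLike.apply_eq_iff_eq]
  have hA' : φ Q * φ A * φ Q = φ Q * φ A ↔ Q * A * Q = Q * A := by
    simp only [← map_mul, EmbeddingLike.apply_eq_iff_eq]
  exact and_congr hA (and_congr hA' hB)

lemma exists_pclqPair_iff_exists_unitary {𝕜 m : Type*} [RCLike 𝕜] {d k l : ℕ} (hkl : k ≤ l)
    (hld : l ≤ d) {A : Matrix (Fin d) (Fin d) 𝕜} {B : Matrix (Fin d) m 𝕜} :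
    (∃ P Q : Matrix (Fin d) (Fin d) 𝕜, IsStarProjection P ∧ IsStarProjection Q ∧ Q * P = P ∧
      P.rank = k ∧ Q.rank = l ∧ IsPCLQPair A B P Q) ↔
    ∃ U : unitaryGroup (Fin d) 𝕜,
      IsPCLQPair (conjStarAlgAut 𝕜 _ U A) ((U : Matrix (Fin d) (Fin d) 𝕜) * B)
        (coordProj 𝕜 {i : Fin d | (i : ℕ) < k}) (coordProj 𝕜 {i : Fin d | (i : ℕ) < l}) := by
  constructor
  · rintro ⟨P, Q, hP, hQ, hQP, rfl, rfl, hPQ⟩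
    obtain ⟨U, hUP, hUQ⟩ := exists_unitary_conj_eq_coordProj hP hQ hQP
    exact ⟨U, hUP ▸ hUQ ▸ (isPCLQPair_conjStarAlgAut_iff U).2 hPQ⟩
  · rintro ⟨U, hU⟩
    let φ := conjStarAlgAut 𝕜 _ U
    let P := φ.symm (coordProj 𝕜 {i : Fin d | (i : ℕ) < k})
    let Q := φ.symm (coordProj 𝕜 {i : Fin d | (i : ℕ) < l})
    have hP : φ P = coordProj 𝕜 {i : Fin d | (i : ℕ) < k} := φ.apply_symm_apply _
    have hQ : φ Q = coordProj 𝕜 {i : Fin d | (i : ℕ) < l} := φ.apply_symm_apply _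
    have hQP : Q * P = P := by
      rw [← map_mul, coordProj_mul_coordProj_eq_right_iff.2]
      exact fun i hi => lt_of_lt_of_le hi hkl
    refine ⟨P, Q, (isStarProjection_coordProj _).map φ.symm,
      (isStarProjection_coordProj _).map φ.symm, hQP, ?_, ?_,
      (isPCLQPair_conjStarAlgAut_iff U).1 (hP.symm ▸ hQ.symm ▸ hU)⟩
    · rw [← rank_conjStarAlgAut U, hP, rank_coordProj, ncard_setOf_val_lt (hkl.trans hld)]
    · rw [← rank_conjStarAlgAut U, hQ, rank_coordProj, ncard_setOf_val_lt hld]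

end PCLQ

theorem stmt_5_general {𝕜 m : Type*} [RCLike 𝕜] [Fintype m] {d sc s : ℕ} (h1 : sc ≤ s) (h2 : s ≤ d)
    (A : Matrix (Fin d) (Fin d) 𝕜) (B : Matrix (Fin d) m 𝕜) :
    (∃ Pc Pr : Matrix (Fin d) (Fin d) 𝕜,
      Pc.IsHermitian ∧ Pc * Pc = Pc ∧ Pr.IsHermitian ∧ Pr * Pr = Pr ∧
      LinearMap.range B.mulVecLin ≤ LinearMap.range Pc.mulVecLin ∧
      LinearMap.range Pc.mulVecLin ≤ LinearMap.range Pr.mulVecLin ∧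
      Pc.rank = sc ∧ Pr.rank = s ∧
      A * Pc = Pc * (A * Pc) ∧
      (1 - Pc) * Aᴴ * Pr = Pr * ((1 - Pc) * Aᴴ * Pr) ∧
      A = Pc * A * Pc + Pr * A * (Pr - Pc) + (1 - Pr) * A * (1 - Pc)) ↔
    (∃ U : Matrix (Fin d) (Fin d) 𝕜, Uᴴ * U = 1 ∧ U * Uᴴ = 1 ∧
      (∀ i j : Fin d, sc ≤ (i : ℕ) → (j : ℕ) < sc → (U * A * Uᴴ) i j = 0) ∧
      (∀ i j : Fin d, (i : ℕ) < s → s ≤ (j : ℕ) → (U * A * Uᴴ) i j = 0) ∧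
      (∀ (i : Fin d) (k : m), sc ≤ (i : ℕ) → (U * B) i k = 0)) := by
  calc
    _ ↔ ∃ Pc Pr : Matrix (Fin d) (Fin d) 𝕜, IsStarProjection Pc ∧ IsStarProjection Pr ∧
          Pr * Pc = Pc ∧ Pc.rank = sc ∧ Pr.rank = s ∧ IsPCLQPair A B Pc Pr := by
      refine exists₂_congr fun Pc Pr => ⟨?_, ?_⟩
      · rintro ⟨hc, hc2, hr, hr2, hB, hle, rankc, rankr, hA, hdec⟩
        rw [range_mulVecLin_le_range_mulVecLin_iff hc2] at hB
        rw [range_mulVecLin_le_range_mulVecLin_iff hr2] at hle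
        exact ⟨⟨hc2, hc⟩, ⟨hr2, hr⟩, hle, rankc, rankr, hA.symm,
          (projection_decomposition_iff_mul_mul_eq hr hle hA.symm).1 hdec, hB⟩
      · rintro ⟨⟨hc2, hc⟩, ⟨hr2, hr⟩, hle, rankc, rankr, hA, hA', hB⟩
        exact ⟨hc, hc2, hr, hr2, (range_mulVecLin_le_range_mulVecLin_iff hc2).2 hB,
          (range_mulVecLin_le_range_mulVecLin_iff hr2).2 hle, rankc, rankr, hA.symm,
          (projection_decomposition_iff_mul_mul_eq hr hle hA).2 hA'⟩
    _ ↔ _ := exists_pclqPair_iff_exists_unitary h1 h2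
    _ ↔ _ := by
      simp only [isPCLQPair_coordProj_iff, Set.mem_ofPred_eq, not_lt, conjStarAlgAut_apply]
      exact ⟨fun ⟨U, hU⟩ => ⟨U, coe_star_mul_self U, coe_mul_star_self U, hU⟩,
        fun ⟨U, hU, hU', h⟩ => ⟨⟨U, hU, hU'⟩, h⟩⟩

/-- For `A ∈ ℝ^{d×d}`, `B ∈ ℝ^{d×d_u}` and `sc ≤ s ≤ d`, the following are
equivalent: (i) there are orthogonal projection matrices `Pc`, `Pr` with
`colspan B ⊆ range Pc ⊆ range Pr`, `rank Pc = sc`, `rank Pr = s`, the range of `Pc` is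
`A`-invariant, the range of `Pr` is `(I - Pc)Aᵀ`-invariant, and
`A = Pc A Pc + Pr A (Pr - Pc) + (I - Pr) A (I - Pc)`; (ii) there is an orthogonal `U` such
that `(U A Uᵀ, U B)` is in PC-LQ block form with block sizes `(sc, s - sc, d - s)`. -/
theorem stmt_5 {d du sc s : ℕ} (h1 : sc ≤ s) (h2 : s ≤ d)
    (A : Matrix (Fin d) (Fin d) ℝ) (B : Matrix (Fin d) (Fin du) ℝ) :
    (∃ Pc Pr : Matrix (Fin d) (Fin d) ℝ,
      Pc.IsSymm ∧ Pc * Pc = Pc ∧ Pr.IsSymm ∧ Pr * Pr = Pr ∧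
      LinearMap.range B.mulVecLin ≤ LinearMap.range Pc.mulVecLin ∧
      LinearMap.range Pc.mulVecLin ≤ LinearMap.range Pr.mulVecLin ∧
      Pc.rank = sc ∧ Pr.rank = s ∧
      A * Pc = Pc * (A * Pc) ∧
      (1 - Pc) * A.transpose * Pr = Pr * ((1 - Pc) * A.transpose * Pr) ∧
      A = Pc * A * Pc + Pr * A * (Pr - Pc) + (1 - Pr) * A * (1 - Pc)) ↔
    (∃ U : Matrix (Fin d) (Fin d) ℝ, U.transpose * U = 1 ∧ U * U.transpose = 1 ∧
      (∀ i j : Fin d, sc ≤ (i : ℕ) → (j : ℕ) < sc → (U * A * U.transpose) i j = 0) ∧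
      (∀ i j : Fin d, (i : ℕ) < s → s ≤ (j : ℕ) → (U * A * U.transpose) i j = 0) ∧
      (∀ (i : Fin d) (k : Fin du), sc ≤ (i : ℕ) → (U * B) i k = 0)) := by
  simpa only [IsHermitian, conjTranspose_eq_transpose_of_trivial] using!
    stmt_5_general h1 h2 A B
end

section
/- Let A ∈ ℝ^{d×d} and B ∈ ℝ^{d×d_u} be in the PC-LQ block form with block sizes (s_c, s_e, d−s_c−s_e), let R ∈ ℝ^{d_u×d_u} be any matrix, let K = [K₁, K₂, 0] ∈ ℝ^{d_u×d} be a feedback gain whose third block of columns is zero, and let I₁ ∈ ℝ^{d×d} be the diagonal matrix with I₁(i,i) = 1 for each index i in the first block (the first s_c coordinates) and I₁(i,i) = 0 otherwise. Set M = A + BK. Then for every t ≥ 0, the matrix (Mᵀ)ᵗ (I₁ + Kᵀ R K) Mᵗ has all entries equal to zero in every row and every column whose index belongs to the third block (the last d−s_c−s_e coordinates). Consequently, if the series Σ_{t=0}^∞ (Mᵀ)ᵗ (I₁ + Kᵀ R K) Mᵗ is summable with sum P_K, then every entry of P_K in a third-block row or third-block column is zero. -/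
/-!
The third block spans an `A`-invariant subspace `V` annihilated by `K`, so the closed loop
`M = A + BK` agrees with `A` on `V` and leaves `V` invariant. The stage cost `C = I₁ + Kᵀ R K`, read
as a bilinear form, has `V` in both of its radicals, so the same is true of each pullback
`(x, y) ↦ C (Mᵗ x, Mᵗ y)` and, entry by entry, of the sum of these.
-/

section CoordinateSubspaces

open scoped Matrix

variable {l m n α : Type*}

/-- The matrix `M` maps every vector supported on `S` to a vector supported on `T`, expressed
through entries. In particular, `MapsSupport M S ∅` says that the columns of `M` indexed by `S`
vanish. -/
def MapsSupport [Zero α] (M : Matrix m n α) (S : Set n) (T : Set m) : Prop :=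
  ∀ ⦃i j⦄, i ∉ T → j ∈ S → M i j = 0

/-- All rows and columns of `N` indexed by `S` vanish: the coordinate vectors of `S` lie in the left
and right radicals of the bilinear form with matrix `N`. -/
def SupportedOff [Zero α] (N : Matrix n n α) (S : Set n) : Prop :=
  ∀ ⦃i j⦄, i ∈ S ∨ j ∈ S → N i j = 0

variable {S : Set n} {T : Set m} {U : Set l}

theorem MapsSupport.add [AddZeroClass α] {M M' : Matrix m n α}
    (hM : MapsSupport M S T) (hM' : MapsSupport M' S T) : MapsSupport (M + M') S T :=
  fun i j hi hj => by rw [Matrix.add_apply, hM hi hj, hM' hi hj, add_zero]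

theorem MapsSupport.mul [Fintype m] [NonUnitalNonAssocSemiring α]
    {M : Matrix l m α} {M' : Matrix m n α}
    (hM : MapsSupport M T U) (hM' : MapsSupport M' S T) : MapsSupport (M * M') S U := by
  intro i j hi hj
  rw [Matrix.mul_apply]
  refine Finset.sum_eq_zero fun k _ => ?_
  by_cases hk : k ∈ T
  · rw [hM hi hk, zero_mul]
  · rw [hM' hk hj, mul_zero]

theorem SupportedOff.add [AddZeroClass α] {N N' : Matrix n n α}
    (hN : SupportedOff N S) (hN' : SupportedOff N' S) : SupportedOff (N + N') S :=
  fun i j hij => by rw [Matrix.add_apply, hN hij, hN' hij, add_zero]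

theorem supportedOff_empty [Zero α] (N : Matrix n n α) : SupportedOff N ∅ :=
  fun _ _ hij => absurd hij (not_or_intro id id)

theorem supportedOff_diagonal [DecidableEq n] [Zero α] {v : n → α} (hv : ∀ i ∈ S, v i = 0) :
    SupportedOff (Matrix.diagonal v) S := by
  intro i j hij
  obtain rfl | hne := eq_or_ne i j
  · rw [Matrix.diagonal_apply_eq, hv i (or_self_iff.mp hij)]
  · exact Matrix.diagonal_apply_ne v hne

theorem SupportedOff.transpose_mul_mul [Fintype m] [NonUnitalNonAssocSemiring α]
    {N : Matrix m m α} {M : Matrix m n α} (hN : SupportedOff N T) (hM : MapsSupport M S T) :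
    SupportedOff (Mᵀ * N * M) S := by
  intro i j hij
  simp only [Matrix.mul_apply, Matrix.transpose_apply, Finset.sum_mul]
  refine Finset.sum_eq_zero fun k _ => Finset.sum_eq_zero fun k' _ => ?_
  by_cases hk : k' ∈ T ∨ k ∈ T
  · rw [hN hk, mul_zero, zero_mul]
  · obtain ⟨hk', hk⟩ := not_or.mp hk
    rcases hij with hi | hj
    · rw [hM hk' hi, zero_mul, zero_mul]
    · rw [hM hk hj, mul_zero]

theorem SupportedOff.transpose_pow_mul_mul_pow [Fintype n] [DecidableEq n] [Semiring α]
    {N M : Matrix n n α} (hN : SupportedOff N S) (hM : MapsSupport M S S) (t : ℕ) :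
    SupportedOff (Mᵀ ^ t * N * M ^ t) S := by
  induction t with
  | zero => simpa only [pow_zero, one_mul, mul_one] using hN
  | succ t ih =>
    have pullback_succ :
        Mᵀ ^ (t + 1) * N * M ^ (t + 1) = Mᵀ * (Mᵀ ^ t * N * M ^ t) * M := by
      simp only [pow_succ' Mᵀ, pow_succ M, mul_assoc]
    rw [pullback_succ]
    exact ih.transpose_mul_mul hM

theorem SupportedOff.of_hasSum {ι : Type*} [AddCommMonoid α] [TopologicalSpace α] [T2Space α]
    {f : ι → Matrix n n α} {P : Matrix n n α} (hf : ∀ t, SupportedOff (f t) S)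
    (hP : HasSum f P) : SupportedOff P S := by
  intro i j hij
  have hPij : HasSum (fun t => f t i j) (P i j) := Pi.hasSum.mp (Pi.hasSum.mp hP i) j
  simp only [fun t => hf t hij] at hPij
  exact hPij.unique hasSum_zero

theorem stmt_6_general [Fintype m] [Fintype n] [DecidableEq n]
    [Semiring α] [TopologicalSpace α] [T2Space α]
    {A : Matrix n n α} (B : Matrix n m α) (R : Matrix m m α) {K : Matrix m n α}
    {Q : Matrix n n α} (hA : MapsSupport A S S) (hK : MapsSupport K S ∅)
    (hQ : SupportedOff Q S) :
    (∀ t : ℕ, SupportedOff ((A + B * K)ᵀ ^ t * (Q + Kᵀ * R * K) * (A + B * K) ^ t) S) ∧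
    ∀ P : Matrix n n α,
      HasSum (fun t : ℕ => (A + B * K)ᵀ ^ t * (Q + Kᵀ * R * K) * (A + B * K) ^ t) P →
      SupportedOff P S := by
  have hB : MapsSupport B ∅ S := fun _ _ _ hj => hj.elim
  have closed_loop : MapsSupport (A + B * K) S S := hA.add (hB.mul hK)
  have stage_cost : SupportedOff (Q + Kᵀ * R * K) S :=
    hQ.add ((supportedOff_empty R).transpose_mul_mul hK)
  have summand := stage_cost.transpose_pow_mul_mul_pow closed_loop
  exact ⟨summand, fun _ => SupportedOff.of_hasSum summand⟩

end CoordinateSubspaces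

/-- Let `(A, B)` be in PC-LQ block form with block sizes
`(sc, se, d - sc - se)`, `R` arbitrary, `K = [K₁, K₂, 0]` a feedback gain whose third block
of columns vanishes, and `I₁` the diagonal matrix which is `1` exactly on the first block.
With `M = A + BK`, every matrix `(Mᵀ)ᵗ (I₁ + Kᵀ R K) Mᵗ` has zero entries in all rows and
columns indexed by the third block; consequently so does any sum `P_K` of the series. -/
theorem stmt_6 {d du sc se : ℕ}
    (A : Matrix (Fin d) (Fin d) ℝ) (B : Matrix (Fin d) (Fin du) ℝ)
    -- PC-LQ block form of `(A, B)`
    (hA1 : ∀ i j : Fin d, sc ≤ (i : ℕ) → (j : ℕ) < sc → A i j = 0)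
    (hA2 : ∀ i j : Fin d, (i : ℕ) < sc + se → sc + se ≤ (j : ℕ) → A i j = 0)
    (hB : ∀ (i : Fin d) (k : Fin du), sc ≤ (i : ℕ) → B i k = 0)
    (R : Matrix (Fin du) (Fin du) ℝ)
    (K : Matrix (Fin du) (Fin d) ℝ)
    (hK : ∀ (k : Fin du) (j : Fin d), sc + se ≤ (j : ℕ) → K k j = 0)
    (I₁ : Matrix (Fin d) (Fin d) ℝ)
    (hI₁ : I₁ = Matrix.diagonal fun i : Fin d => if (i : ℕ) < sc then (1 : ℝ) else 0)
    (M : Matrix (Fin d) (Fin d) ℝ) (hM : M = A + B * K) :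
    (∀ t : ℕ, ∀ i j : Fin d, sc + se ≤ (i : ℕ) ∨ sc + se ≤ (j : ℕ) →
      (M.transpose ^ t * (I₁ + K.transpose * R * K) * M ^ t) i j = 0) ∧
    ∀ PK : Matrix (Fin d) (Fin d) ℝ,
      HasSum (fun t : ℕ => M.transpose ^ t * (I₁ + K.transpose * R * K) * M ^ t) PK →
      ∀ i j : Fin d, sc + se ≤ (i : ℕ) ∨ sc + se ≤ (j : ℕ) → PK i j = 0 := by
  subst hI₁ hM
  exact stmt_6_general (S := {i : Fin d | sc + se ≤ (i : ℕ)}) B R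
    (fun i j hi => hA2 i j (not_le.mp hi)) (fun k j _ hj => hK k j hj)
    (supportedOff_diagonal fun _ hi => if_neg (not_lt.mpr ((Nat.le_add_right sc se).trans hi)))
end

section
/- Let A ∈ ℝ^{d×d} and B ∈ ℝ^{d×d_u} be in the PC-LQ block form with block sizes (s_c, s_e, d−s_c−s_e), let I be any set of coordinate indices contained in the second and third blocks (i.e., every i ∈ I satisfies i > s_c), let K ∈ ℝ^{d_u×d} be a feedback gain such that every complex eigenvalue of A + BK has modulus strictly less than 1, and let x ∈ ℝ^d. Then the series Σ_{t=0}^∞ Σ_{i∈I} (((A + BK)ᵗ x)ᵢ)² converges, and its value equals Σ_{t=0}^∞ Σ_{i∈I} ((Aᵗ x)ᵢ)²; in particular this value does not depend on K. -/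
/-!
By Gelfand's formula, the powers of a stable matrix decay geometrically, which gives convergence.
In the PC-LQ form the coordinates outside the first block are not driven by those inside it, and
the feedback enters only through the first block. The former coordinates hence follow the same
trajectory under `A` and under `A + B * K`.
-/

open Filter Set

section BanachAlgebra

open scoped NNReal ENNReal

variable {𝔸 : Type*} [NormedRing 𝔸] [NormedAlgebra ℂ 𝔸] [CompleteSpace 𝔸]

theorem eventually_norm_pow_le_pow_of_spectralRadius_lt {a : 𝔸} {r : ℝ≥0}
    (h : spectralRadius ℂ a < r) : ∀ᶠ n : ℕ in atTop, ‖a ^ n‖ ≤ (r : ℝ) ^ n := by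
  have root_lt :=
    (spectrum.pow_nnnorm_pow_one_div_tendsto_nhds_spectralRadius a).eventually_lt_const h
  filter_upwards [root_lt, eventually_gt_atTop 0] with n hn n_pos
  rw [one_div] at hn
  have hpow := (ENNReal.rpow_inv_le_iff (Nat.cast_pos.mpr n_pos)).mp hn.le
  rw [ENNReal.rpow_natCast] at hpow
  exact_mod_cast hpow

theorem summable_norm_pow_of_spectralRadius_lt_one {a : 𝔸} (h : spectralRadius ℂ a < 1) :
    Summable fun n : ℕ => ‖a ^ n‖ := by
  obtain ⟨r, radius_lt, r_lt_one⟩ := ENNReal.lt_iff_exists_nnreal_btwn.mp h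
  refine .of_norm_bounded_eventually_nat
    (summable_geometric_of_lt_one r.coe_nonneg (mod_cast r_lt_one)) ?_
  simpa only [norm_norm] using eventually_norm_pow_le_pow_of_spectralRadius_lt radius_lt

theorem summable_norm_pow_of_forall_mem_spectrum_norm_lt_one {a : 𝔸}
    (h : ∀ z ∈ spectrum ℂ a, ‖z‖ < 1) : Summable fun n : ℕ => ‖a ^ n‖ := by
  apply summable_norm_pow_of_spectralRadius_lt_one
  cases subsingleton_or_nontrivial 𝔸
  · simp only [spectrum.SpectralRadius.of_subsingleton, zero_lt_one]
  · exact_mod_cast spectrum.spectralRadius_lt_of_forall_lt a (r := 1) h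

end BanachAlgebra

section StableMatrix

variable {n : Type*} [Fintype n] [DecidableEq n]

attribute [local instance] Matrix.linftyOpNormedRing Matrix.linftyOpNormedAlgebra in
theorem summable_matrix_pow_of_forall_mem_spectrum_norm_lt_one {M : Matrix n n ℂ}
    (h : ∀ z ∈ spectrum ℂ M, ‖z‖ < 1) : Summable fun t : ℕ => M ^ t :=
  (summable_norm_pow_of_forall_mem_spectrum_norm_lt_one h).of_norm

theorem summable_real_matrix_pow_of_forall_mem_spectrum_norm_lt_one {M : Matrix n n ℝ}
    (h : ∀ z ∈ spectrum ℂ (M.map Complex.ofReal), ‖z‖ < 1) : Summable fun t : ℕ => M ^ t := by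
  have re_pow (t : ℕ) : (M.map Complex.ofReal ^ t).map Complex.re = M ^ t := by
    change (M.map Complex.ofRealHom ^ t).map Complex.re = M ^ t
    rw [← Matrix.map_pow, Matrix.map_map]
    exact Matrix.map_id _
  have re_summable := (summable_matrix_pow_of_forall_mem_spectrum_norm_lt_one h).map
    Complex.reAddGroupHom.mapMatrix (continuous_id.matrix_map Complex.continuous_re)
  simpa only [Function.comp_def, AddMonoidHom.mapMatrix_apply, Complex.coe_reAddGroupHom, re_pow]
    using re_summable

theorem summable_sq_matrix_pow_mulVec_apply {M : Matrix n n ℝ}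
    (h : ∀ z ∈ spectrum ℂ (M.map Complex.ofReal), ‖z‖ < 1) (x : n → ℝ) (i : n) :
    Summable fun t : ℕ => ((M ^ t).mulVec x i) ^ 2 := by
  let evalAt : Matrix n n ℝ →+ ℝ :=
    { toFun N := N.mulVec x i
      map_zero' := by simp only [Matrix.zero_mulVec, Pi.zero_apply]
      map_add' N N' := by simp only [Matrix.add_mulVec, Pi.add_apply] }
  have coord_summable : Summable fun t : ℕ => (M ^ t).mulVec x i :=
    (summable_real_matrix_pow_of_forall_mem_spectrum_norm_lt_one h).map evalAt
      ((continuous_apply i).comp (continuous_id.matrix_mulVec continuous_const))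
  simpa only [sq] using coord_summable.norm.mul_tendsto_const coord_summable.tendsto_cofinite_zero

end StableMatrix

section DecoupledCoordinates

variable {R l m n : Type*}

theorem eqOn_mulVec_of_eqOn_rows [NonUnitalNonAssocSemiring R] [Fintype n] {S : Set l} {T : Set n}
    {A A' : Matrix l n R} (hrows : EqOn A A' S) (hA : ∀ i ∈ S, ∀ j ∉ T, A i j = 0)
    {x y : n → R} (hxy : EqOn x y T) : EqOn (A.mulVec x) (A'.mulVec y) S := by
  intro i hi
  simp only [Matrix.mulVec, ← hrows hi, dotProduct]
  refine Finset.sum_congr rfl fun j _ => ?_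
  by_cases hj : j ∈ T
  · rw [hxy hj]
  · rw [hA i hi j hj, zero_mul, zero_mul]

theorem eqOn_pow_mulVec_of_eqOn_rows [Semiring R] [Fintype n] [DecidableEq n] {S : Set n}
    {A A' : Matrix n n R} (hrows : EqOn A A' S) (hA : ∀ i ∈ S, ∀ j ∉ S, A i j = 0)
    (x : n → R) (t : ℕ) : EqOn ((A ^ t).mulVec x) ((A' ^ t).mulVec x) S := by
  induction t with
  | zero => simp only [pow_zero, eqOn_refl]
  | succ t ih =>
    simpa only [pow_succ', ← Matrix.mulVec_mulVec] using eqOn_mulVec_of_eqOn_rows hrows hA ih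

theorem eqOn_rows_add_mul [NonUnitalNonAssocSemiring R] [Fintype m] {S : Set l} (A : Matrix l n R)
    {B : Matrix l m R} (hB : ∀ i ∈ S, ∀ k, B i k = 0) (K : Matrix m n R) :
    EqOn A (A + B * K) S := by
  intro i hi
  ext j
  simp only [Matrix.add_apply, Matrix.mul_apply, hB i hi, zero_mul, Finset.sum_const_zero, add_zero]

end DecoupledCoordinates

theorem stmt_9_general {m n : Type*} [Fintype m] [Fintype n] [DecidableEq n]
    {A : Matrix n n ℝ} {B : Matrix n m ℝ} {S : Set n} (hA : ∀ i ∈ S, ∀ j ∉ S, A i j = 0)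
    (hB : ∀ i ∈ S, ∀ k, B i k = 0) {I : Finset n} (hI : ↑I ⊆ S) {K : Matrix m n ℝ}
    (hstab : ∀ z ∈ spectrum ℂ ((A + B * K).map Complex.ofReal), ‖z‖ < 1) (x : n → ℝ) :
    Summable (fun t : ℕ => ∑ i ∈ I, (((A + B * K) ^ t).mulVec x i) ^ 2) ∧
    (∑' t : ℕ, ∑ i ∈ I, (((A + B * K) ^ t).mulVec x i) ^ 2) =
      ∑' t : ℕ, ∑ i ∈ I, ((A ^ t).mulVec x i) ^ 2 := by
  refine ⟨summable_sum fun i _ => summable_sq_matrix_pow_mulVec_apply hstab x i, ?_⟩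
  refine tsum_congr fun t => Finset.sum_congr rfl fun i hi => ?_
  rw [eqOn_pow_mulVec_of_eqOn_rows (eqOn_rows_add_mul A hB K) hA x t (hI hi)]

/-- Let `(A, B)` be in PC-LQ block form with block sizes
`(sc, se, d - sc - se)`, let `I` be a set of coordinates contained in the second and third
blocks, let `K` be a feedback gain such that every complex eigenvalue of `A + BK` has
modulus `< 1`, and let `x ∈ ℝ^d`. Then `∑_{t} ∑_{i ∈ I} (((A + BK)ᵗ x)_i)²` converges and
equals `∑_{t} ∑_{i ∈ I} ((Aᵗ x)_i)²`; in particular it does not depend on `K`. -/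
theorem stmt_9 {d du sc se : ℕ}
    (A : Matrix (Fin d) (Fin d) ℝ) (B : Matrix (Fin d) (Fin du) ℝ)
    -- PC-LQ block form of `(A, B)`
    (hA1 : ∀ i j : Fin d, sc ≤ (i : ℕ) → (j : ℕ) < sc → A i j = 0)
    (hA2 : ∀ i j : Fin d, (i : ℕ) < sc + se → sc + se ≤ (j : ℕ) → A i j = 0)
    (hB : ∀ (i : Fin d) (k : Fin du), sc ≤ (i : ℕ) → B i k = 0)
    (I : Finset (Fin d)) (hI : ∀ i ∈ I, sc ≤ (i : ℕ))
    (K : Matrix (Fin du) (Fin d) ℝ)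
    (hstab : ∀ z ∈ spectrum ℂ ((A + B * K).map Complex.ofReal), ‖z‖ < 1)
    (x : Fin d → ℝ) :
    Summable (fun t : ℕ => ∑ i ∈ I, ((((A + B * K) ^ t).mulVec x) i) ^ 2) ∧
    (∑' t : ℕ, ∑ i ∈ I, ((((A + B * K) ^ t).mulVec x) i) ^ 2) =
      ∑' t : ℕ, ∑ i ∈ I, (((A ^ t).mulVec x) i) ^ 2 :=
  stmt_9_general (S := {i : Fin d | sc ≤ (i : ℕ)}) (fun i hi j hj => hA1 i j hi (not_le.mp hj))
    (fun i hi k => hB i k hi) hI hstab x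
end

section
/- Let ρ ∈ ℝ with |ρ| < 1. Define the 2×2 real matrices A = [[1, 1],[0, ρ]], Q = [[1, 0],[0, 0]], the 2×1 matrix B = [1; 0], and the scalar R = 1. Set p₁ = (1 + √5)/2, p₁₂ = p₁/(p₁² − ρ), p₂ = (p₁⁵ − p₁ρ² − p₁⁴)/((1 − ρ²)(p₁² − ρ)²), and P = [[p₁, p₁₂],[p₁₂, p₂]]. Then P satisfies the discrete algebraic Riccati equation P = Aᵀ P A + Q − (Bᵀ P A)ᵀ (R + Bᵀ P B)⁻¹ (Bᵀ P A) (where Bᵀ P B and Bᵀ P A are a scalar and a 1×2 row vector, respectively), and P is positive semidefinite (det P ≥ 0 and trace P ≥ 0, hence both eigenvalues of the symmetric matrix P are nonnegative). -/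
/-!
Since `Bᵀ P B` is a scalar, the Riccati equation is a system of three scalar equations. With
`p² = p + 1` the diagonal one for `p` holds, and the scalar `R + Bᵀ P B = 1 + p` is `p²`. The
off-diagonal equation then becomes `s (p² - ρ) = p`, and the remaining one
`t (1 - ρ²) = p + 2 ρ s - p² s²`; solving them gives the entries `s` and `t` of `P`.
Reducing powers of `p` shows `det P = p³ / ((1 - ρ²) (p² - ρ)²)`.
-/

section RiccatiMap

open Matrix

/-- The right-hand side of the discrete algebraic Riccati equation, so that the solutions of the
equation are the fixed points `P`. The matrix inverse is `0` if `R + Bᵀ P B` is not invertible. -/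
noncomputable def riccatiMap {n m K : Type*} [Fintype n] [Fintype m] [DecidableEq m] [CommRing K]
    (A : Matrix n n K) (B : Matrix n m K) (Q : Matrix n n K) (R : Matrix m m K)
    (P : Matrix n n K) : Matrix n n K :=
  Aᵀ * P * A + Q - (Bᵀ * P * A)ᵀ * (R + Bᵀ * P * B)⁻¹ * (Bᵀ * P * A)

theorem riccatiMap_apply_of_unique {n m K : Type*} [Fintype n] [Fintype m] [DecidableEq m]
    [Unique m] [Field K] (A : Matrix n n K) (B : Matrix n m K) (Q : Matrix n n K)
    (R : Matrix m m K) (P : Matrix n n K) (i j : n) :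
    riccatiMap A B Q R P i j = (Aᵀ * P * A) i j + Q i j -
      (Bᵀ * P * A) default i * (Bᵀ * P * A) default j /
        (R default default + (Bᵀ * P * B) default default) := by
  rw [riccatiMap, inv_subsingleton, Matrix.sub_apply, Matrix.add_apply,
    mul_apply (N := Bᵀ * P * A), Fintype.sum_unique, mul_diagonal, Ring.inverse_eq_inv',
    transpose_apply, Matrix.add_apply, div_eq_mul_inv, mul_right_comm]

theorem riccatiMap_upperTriangular {K : Type*} [Field K] (a b d q p s t : K)
    (R : Matrix (Fin 1) (Fin 1) K) :
    riccatiMap !![a, b; 0, d] !![1; 0] !![q, 0; 0, 0] R !![p, s; s, t] =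
      !![a ^ 2 * p + q - (a * p) ^ 2 / (R 0 0 + p),
          a * (b * p + d * s) - a * p * (b * p + d * s) / (R 0 0 + p);
        a * (b * p + d * s) - a * p * (b * p + d * s) / (R 0 0 + p),
          b ^ 2 * p + 2 * b * d * s + d ^ 2 * t - (b * p + d * s) ^ 2 / (R 0 0 + p)] := by
  ext i j
  rw [riccatiMap_apply_of_unique]
  fin_cases i <;> fin_cases j <;>
    simp only [Fin.zero_eta, Fin.mk_one, Fin.default_eq_zero, mul_apply, Fin.sum_univ_two,
      transpose_apply, of_apply, cons_val] <;>
    ring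

end RiccatiMap

section Field

variable {K : Type*} [Field K] {p ρ : K}

/-- The matrix `P` of the theorem, for an arbitrary `p` in place of the golden ratio. -/
def riccatiSolution (p ρ : K) : Matrix (Fin 2) (Fin 2) K :=
  !![p, p / (p ^ 2 - ρ);
    p / (p ^ 2 - ρ), (p ^ 5 - p * ρ ^ 2 - p ^ 4) / ((1 - ρ ^ 2) * (p ^ 2 - ρ) ^ 2)]

theorem add_mul_div_sq_sub (hpρ : p ^ 2 - ρ ≠ 0) :
    p + ρ * (p / (p ^ 2 - ρ)) = p ^ 2 * (p / (p ^ 2 - ρ)) := by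
  field_simp
  ring

theorem riccatiSolution_one_one_mul (hρ : 1 - ρ ^ 2 ≠ 0) (hpρ : p ^ 2 - ρ ≠ 0) :
    riccatiSolution p ρ 1 1 * (1 - ρ ^ 2) =
      p + 2 * ρ * (p / (p ^ 2 - ρ)) - p ^ 2 * (p / (p ^ 2 - ρ)) ^ 2 := by
  simp only [riccatiSolution, Matrix.of_apply, Matrix.cons_val]
  field_simp
  ring

theorem riccatiMap_riccatiSolution (hp : p ^ 2 = p + 1) (hρ : 1 - ρ ^ 2 ≠ 0)
    (hpρ : p ^ 2 - ρ ≠ 0) :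
    riccatiMap !![1, 1; 0, ρ] !![1; 0] !![1, 0; 0, 0] 1 (riccatiSolution p ρ) =
      riccatiSolution p ρ := by
  have hp₀ : p ≠ 0 := by
    rintro rfl
    simp at hp
  have row := add_mul_div_sq_sub hpρ
  have corner := riccatiSolution_one_one_mul hρ hpρ
  have scalar_eq_sq : (1 : Matrix (Fin 1) (Fin 1) K) 0 0 + p = p ^ 2 := by
    rw [Matrix.one_apply_eq, hp, add_comm]
  simp only [riccatiSolution, Matrix.of_apply, Matrix.cons_val] at corner ⊢
  rw [riccatiMap_upperTriangular, scalar_eq_sq]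
  simp only [one_pow, one_mul, mul_one]
  generalize p / (p ^ 2 - ρ) = s at *
  generalize (p ^ 5 - p * ρ ^ 2 - p ^ 4) / _ = t at *
  have diagonal : p + 1 - p ^ 2 / p ^ 2 = p := by
    rw [div_self (pow_ne_zero 2 hp₀), add_sub_cancel_right]
  have offDiagonal : p + ρ * s - p * (p + ρ * s) / p ^ 2 = s := by
    rw [row]
    field_simp
    linear_combination s * hp
  have lastDiagonal : p + 2 * ρ * s + ρ ^ 2 * t - (p + ρ * s) ^ 2 / p ^ 2 = t := by
    rw [row]
    field_simp
    linear_combination -corner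
  rw [diagonal, offDiagonal, lastDiagonal]

theorem riccatiSolution_one_one (hp : p ^ 2 = p + 1) :
    riccatiSolution p ρ 1 1 = p * (p ^ 2 - ρ ^ 2) / ((1 - ρ ^ 2) * (p ^ 2 - ρ) ^ 2) := by
  simp only [riccatiSolution, Matrix.of_apply, Matrix.cons_val]
  congr 1
  linear_combination p ^ 3 * hp

theorem det_riccatiSolution (hp : p ^ 2 = p + 1) (hρ : 1 - ρ ^ 2 ≠ 0) (hpρ : p ^ 2 - ρ ≠ 0) :
    (riccatiSolution p ρ).det = p ^ 3 / ((1 - ρ ^ 2) * (p ^ 2 - ρ) ^ 2) := by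
  rw [Matrix.det_fin_two, riccatiSolution_one_one hp]
  simp only [riccatiSolution, Matrix.of_apply, Matrix.cons_val]
  field_simp
  linear_combination p ^ 2 * hp

end Field

section OrderedField

variable {K : Type*} [Field K] [LinearOrder K] [IsStrictOrderedRing K] {p ρ : K}

theorem one_sub_sq_pos_of_abs_lt_one (hρ : |ρ| < 1) : 0 < 1 - ρ ^ 2 :=
  sub_pos.2 ((sq_lt_one_iff_abs_lt_one ρ).2 hρ)

theorem sq_sub_pos_of_sq_eq_add_one (hρ : ρ < 1) (hp₀ : 0 < p) (hp : p ^ 2 = p + 1) :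
    0 < p ^ 2 - ρ := by
  linarith

theorem det_riccatiSolution_pos (hρ : |ρ| < 1) (hp₀ : 0 < p) (hp : p ^ 2 = p + 1) :
    0 < (riccatiSolution p ρ).det := by
  have hρ_sq := one_sub_sq_pos_of_abs_lt_one hρ
  have hpρ := sq_sub_pos_of_sq_eq_add_one (lt_of_abs_lt hρ) hp₀ hp
  rw [det_riccatiSolution hp hρ_sq.ne' hpρ.ne']
  positivity

theorem trace_riccatiSolution_pos (hρ : |ρ| < 1) (hp₀ : 0 < p) (hp : p ^ 2 = p + 1) :
    0 < (riccatiSolution p ρ).trace := by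
  have hρ_sq := one_sub_sq_pos_of_abs_lt_one hρ
  have hp_sq : 0 < p ^ 2 - ρ ^ 2 := by linarith
  rw [Matrix.trace_fin_two, riccatiSolution_one_one hp]
  exact add_pos_of_pos_of_nonneg hp₀ (by positivity)

theorem stmt_10_general (hρ : |ρ| < 1) (hp₀ : 0 < p) (hp : p ^ 2 = p + 1) :
    riccatiSolution p ρ =
        riccatiMap !![1, 1; 0, ρ] !![1; 0] !![1, 0; 0, 0] 1 (riccatiSolution p ρ) ∧
      0 < (riccatiSolution p ρ).det ∧ 0 < (riccatiSolution p ρ).trace := by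
  have hρ_sq := one_sub_sq_pos_of_abs_lt_one hρ
  have hpρ := sq_sub_pos_of_sq_eq_add_one (lt_of_abs_lt hρ) hp₀ hp
  exact ⟨(riccatiMap_riccatiSolution hp hρ_sq.ne' hpρ.ne').symm,
    det_riccatiSolution_pos hρ hp₀ hp, trace_riccatiSolution_pos hρ hp₀ hp⟩

end OrderedField

/-- For `|ρ| < 1` and the 2-dimensional LQ data
`A = [[1,1],[0,ρ]]`, `B = [1;0]`, `Q = [[1,0],[0,0]]`, `R = 1`, the matrix
`P = [[p₁, p₁₂],[p₁₂, p₂]]` built from `p₁ = (1+√5)/2`, `p₁₂ = p₁/(p₁² - ρ)` and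
`p₂ = (p₁⁵ - p₁ρ² - p₁⁴)/((1-ρ²)(p₁² - ρ)²)` satisfies the discrete algebraic Riccati
equation and is positive semidefinite (`det P ≥ 0` and `trace P ≥ 0`). -/
theorem stmt_10 (ρ : ℝ) (hρ : |ρ| < 1)
    (p₁ p₁₂ p₂ : ℝ)
    (hp₁ : p₁ = (1 + Real.sqrt 5) / 2)
    (hp₁₂ : p₁₂ = p₁ / (p₁ ^ 2 - ρ))
    (hp₂ : p₂ = (p₁ ^ 5 - p₁ * ρ ^ 2 - p₁ ^ 4) / ((1 - ρ ^ 2) * (p₁ ^ 2 - ρ) ^ 2))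
    (A : Matrix (Fin 2) (Fin 2) ℝ) (hA : A = !![1, 1; 0, ρ])
    (Q : Matrix (Fin 2) (Fin 2) ℝ) (hQ : Q = !![1, 0; 0, 0])
    (B : Matrix (Fin 2) (Fin 1) ℝ) (hB : B = !![1; 0])
    (R : Matrix (Fin 1) (Fin 1) ℝ) (hR : R = 1)
    (P : Matrix (Fin 2) (Fin 2) ℝ) (hP : P = !![p₁, p₁₂; p₁₂, p₂]) :
    P = A.transpose * P * A + Q -
        (B.transpose * P * A).transpose * (R + B.transpose * P * B)⁻¹ *
          (B.transpose * P * A) ∧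
    0 ≤ P.det ∧ 0 ≤ P.trace := by
  subst hp₁ hp₁₂ hp₂ hA hQ hB hR hP
  exact (stmt_10_general hρ Real.goldenRatio_pos Real.goldenRatio_sq).imp_right
    (And.imp le_of_lt le_of_lt)
end

section
/- Let ρ ∈ ℝ with |ρ| < 1, set p₁ = (1 − √5)/2, and assume ρ ≠ p₁². Define p₁₂ = p₁/(p₁² − ρ), p₂ = (p₁⁵ − p₁ρ² − p₁⁴)/((1 − ρ²)(p₁² − ρ)²), and P = [[p₁, p₁₂],[p₁₂, p₂]]. Then det P = p₁ p₂ − p₁₂² < 0; in particular, the symmetric matrix P is not positive semidefinite. -/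
/-!
Over the common denominator `(1 - ρ²)(p₁² - ρ)²`, which is positive, the `ρ`-dependent terms in the
numerator of `p₁p₂ - p₁₂²` cancel and leave `p₁²(p₁⁴ - p₁³ - 1)`. Hence the sign of the determinant
is that of `p₁⁴ - p₁³ - 1`, and for the conjugate golden ratio `p₁⁴ - p₁³ = p₁² = p₁ + 1 < 1`.
-/

section Field

variable {K : Type*} [Field K]

/-- The symmetric matrix `P = [[p₁, p₁₂], [p₁₂, p₂]]` as a function of `ρ` and `p = p₁`. Leaving `p`
free shows which property of the golden conjugate decides the sign of the determinant. -/
def candidateMatrix (ρ p : K) : Matrix (Fin 2) (Fin 2) K :=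
  !![p, p / (p ^ 2 - ρ);
    p / (p ^ 2 - ρ),
    (p ^ 5 - p * ρ ^ 2 - p ^ 4) / ((1 - ρ ^ 2) * (p ^ 2 - ρ) ^ 2)]

lemma det_candidateMatrix {ρ p : K} (hρ : 1 - ρ ^ 2 ≠ 0) (hp : p ^ 2 - ρ ≠ 0) :
    (candidateMatrix ρ p).det =
      p ^ 2 * (p ^ 4 - p ^ 3 - 1) / ((1 - ρ ^ 2) * (p ^ 2 - ρ) ^ 2) := by
  rw [candidateMatrix, Matrix.det_fin_two_of]
  field_simp
  ring

lemma det_candidateMatrix_neg [LinearOrder K] [IsStrictOrderedRing K] {ρ p : K}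
    (hρ : |ρ| < 1) (hp₀ : p ≠ 0) (hp : p ^ 4 - p ^ 3 < 1) (hne : ρ ≠ p ^ 2) :
    (candidateMatrix ρ p).det < 0 := by
  have hρ_sq : 0 < 1 - ρ ^ 2 := sub_pos.2 ((sq_lt_one_iff_abs_lt_one ρ).2 hρ)
  have hsub : p ^ 2 - ρ ≠ 0 := sub_ne_zero.2 hne.symm
  have hnum : p ^ 2 * (p ^ 4 - p ^ 3 - 1) < 0 :=
    mul_neg_of_pos_of_neg (by positivity) (sub_neg.2 hp)
  rw [det_candidateMatrix hρ_sq.ne' hsub]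
  exact div_neg_of_neg_of_pos hnum (by positivity)

end Field

open scoped goldenRatio in
lemma goldenConj_pow_four_sub_pow_three_lt_one : ψ ^ 4 - ψ ^ 3 < 1 :=
  calc
    ψ ^ 4 - ψ ^ 3 = ψ ^ 2 * (ψ ^ 2 - ψ) := by ring
    _ = ψ + 1 := by rw [Real.goldenConj_sq, add_sub_cancel_left, mul_one]
    _ < 1 := add_lt_of_neg_left 1 Real.goldenConj_neg

theorem stmt_11_general (ρ : ℝ) (hρ : |ρ| < 1)
    (p₁ p₁₂ p₂ : ℝ)
    (hp₁₀ : p₁ ≠ 0)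
    (hp₁ : p₁ ^ 4 - p₁ ^ 3 < 1)
    (hne : ρ ≠ p₁ ^ 2)
    (hp₁₂ : p₁₂ = p₁ / (p₁ ^ 2 - ρ))
    (hp₂ : p₂ = (p₁ ^ 5 - p₁ * ρ ^ 2 - p₁ ^ 4) / ((1 - ρ ^ 2) * (p₁ ^ 2 - ρ) ^ 2))
    (P : Matrix (Fin 2) (Fin 2) ℝ) (hP : P = !![p₁, p₁₂; p₁₂, p₂]) :
    P.det = p₁ * p₂ - p₁₂ ^ 2 ∧ P.det < 0 ∧ ¬ P.PosSemidef := by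
  have hdet : P.det = p₁ * p₂ - p₁₂ ^ 2 := by rw [hP, Matrix.det_fin_two_of, sq]
  have hP_candidate : P = candidateMatrix ρ p₁ := by rw [hP, hp₁₂, hp₂, candidateMatrix]
  have hdet_neg : P.det < 0 := hP_candidate ▸ det_candidateMatrix_neg hρ hp₁₀ hp₁ hne
  exact ⟨hdet, hdet_neg, fun hpsd => hdet_neg.not_ge hpsd.det_nonneg⟩

/-- For `|ρ| < 1`, `p₁ = (1 - √5)/2` with `ρ ≠ p₁²`, and
`p₁₂ = p₁/(p₁² - ρ)`, `p₂ = (p₁⁵ - p₁ρ² - p₁⁴)/((1-ρ²)(p₁² - ρ)²)`, the matrix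
`P = [[p₁, p₁₂],[p₁₂, p₂]]` has `det P = p₁p₂ - p₁₂² < 0`; in particular `P` is not
positive semidefinite. -/
theorem stmt_11 (ρ : ℝ) (hρ : |ρ| < 1)
    (p₁ p₁₂ p₂ : ℝ)
    (hp₁ : p₁ = (1 - Real.sqrt 5) / 2)
    (hne : ρ ≠ p₁ ^ 2)
    (hp₁₂ : p₁₂ = p₁ / (p₁ ^ 2 - ρ))
    (hp₂ : p₂ = (p₁ ^ 5 - p₁ * ρ ^ 2 - p₁ ^ 4) / ((1 - ρ ^ 2) * (p₁ ^ 2 - ρ) ^ 2))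
    (P : Matrix (Fin 2) (Fin 2) ℝ) (hP : P = !![p₁, p₁₂; p₁₂, p₂]) :
    P.det = p₁ * p₂ - p₁₂ ^ 2 ∧ P.det < 0 ∧ ¬ P.PosSemidef := by
  obtain rfl : p₁ = Real.goldenConj := hp₁
  exact stmt_11_general ρ hρ _ p₁₂ p₂ Real.goldenConj_ne_zero
    goldenConj_pow_four_sub_pow_three_lt_one hne hp₁₂ hp₂ P hP
end

section
/- Let Σ be a symmetric positive definite real n×n matrix, let V be a real n×n matrix, let w ∈ ℝ^n, and let ε ≥ 0 and c ∈ [0, 1). Assume that ‖Σ^{−1/2} V w‖₂ ≤ ε and ‖Σ^{−1/2} V Σ^{−1/2} − I‖_op ≤ c. Then ‖Σ^{1/2} w‖₂ ≤ ε/(1 − c). -/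
/-- The Euclidean (`ℓ₂`) norm of a vector in `ℝ^n`. -/
noncomputable def euclNorm {n : ℕ} (x : Fin n → ℝ) : ℝ :=
  Real.sqrt (∑ i, x i ^ 2)

/-- The spectral (operator `ℓ₂ → ℓ₂`) norm of a real matrix. -/
noncomputable def opNorm {m n : ℕ} (M : Matrix (Fin m) (Fin n) ℝ) : ℝ :=
  sSup {c : ℝ | ∃ x : Fin n → ℝ, euclNorm x ≤ 1 ∧ c = euclNorm (M.mulVec x)}

/-! With `M = S⁻¹ V S⁻¹` and `x = S w` one has `M x = S⁻¹ V w`, and the reverse triangle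
inequality for `x = M x - (M - 1) x` gives `(1 - ‖M - 1‖) ‖x‖ ≤ ‖M x‖`. -/

theorem one_sub_norm_sub_one_mul_norm_le {𝕜 E : Type*} [NontriviallyNormedField 𝕜]
    [SeminormedAddCommGroup E] [NormedSpace 𝕜 E] (T : E →L[𝕜] E) (x : E) :
    (1 - ‖T - 1‖) * ‖x‖ ≤ ‖T x‖ := by
  have triangle : ‖x‖ ≤ ‖T x‖ + ‖T x - x‖ := norm_le_norm_add_norm_sub _ _
  have perturbation : ‖T x - x‖ ≤ ‖T - 1‖ * ‖x‖ := (T - 1).le_opNorm x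
  linarith

theorem euclNorm_eq_norm_toLp {n : ℕ} (x : Fin n → ℝ) : euclNorm x = ‖WithLp.toLp 2 x‖ := by
  simp [euclNorm, EuclideanSpace.norm_eq]

theorem euclNorm_nonneg {n : ℕ} (x : Fin n → ℝ) : 0 ≤ euclNorm x :=
  Real.sqrt_nonneg _

open scoped Matrix.Norms.L2Operator in
theorem opNorm_eq_l2_opNorm {m n : ℕ} (M : Matrix (Fin m) (Fin n) ℝ) : opNorm M = ‖M‖ := by
  rw [Matrix.l2_opNorm_def, ← ContinuousLinearMap.sSup_unitClosedBall_eq_norm, opNorm]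
  congr 1
  ext r
  simp only [euclNorm_eq_norm_toLp, Set.mem_ofPred_eq, Set.mem_image, mem_closedBall_zero_iff]
  exact ⟨fun ⟨x, hx, hr⟩ ↦ ⟨WithLp.toLp 2 x, hx, hr.symm⟩,
    fun ⟨x, hx, hr⟩ ↦ ⟨WithLp.ofLp x, hx, hr.symm⟩⟩

theorem one_sub_opNorm_sub_one_mul_euclNorm_le {n : ℕ} (M : Matrix (Fin n) (Fin n) ℝ)
    (x : Fin n → ℝ) : (1 - opNorm (M - 1)) * euclNorm x ≤ euclNorm (M.mulVec x) := by
  simpa only [opNorm_eq_l2_opNorm, Matrix.cstar_norm_def, map_sub, map_one,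
    Matrix.toEuclideanCLM_toLp, ← euclNorm_eq_norm_toLp] using
    one_sub_norm_sub_one_mul_norm_le (Matrix.toEuclideanCLM (𝕜 := ℝ) M) (WithLp.toLp 2 x)

theorem stmt_12_general {n : ℕ} (S V : Matrix (Fin n) (Fin n) ℝ) (hS : IsUnit S)
    {w : Fin n → ℝ} {ε c : ℝ} (hc1 : c < 1)
    (h1 : euclNorm ((S⁻¹ * V).mulVec w) ≤ ε)
    (h2 : opNorm (S⁻¹ * V * S⁻¹ - 1) ≤ c) :
    euclNorm (S.mulVec w) ≤ ε / (1 - c) := by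
  have hdet : IsUnit S.det := S.isUnit_iff_isUnit_det.mp hS
  rw [le_div_iff₀' (sub_pos.mpr hc1)]
  calc (1 - c) * euclNorm (S.mulVec w)
      ≤ (1 - opNorm (S⁻¹ * V * S⁻¹ - 1)) * euclNorm (S.mulVec w) :=
        mul_le_mul_of_nonneg_right (by linarith) (euclNorm_nonneg _)
    _ ≤ euclNorm ((S⁻¹ * V * S⁻¹).mulVec (S.mulVec w)) :=
        one_sub_opNorm_sub_one_mul_euclNorm_le _ _
    _ = euclNorm ((S⁻¹ * V).mulVec w) := by
        rw [Matrix.mulVec_mulVec, Matrix.nonsing_inv_mul_cancel_right _ _ hdet]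
    _ ≤ ε := h1

/-- Let `Sg` be symmetric positive definite with symmetric positive
definite square root `S` (so `Sg^{1/2} = S` and `Sg^{-1/2} = S⁻¹`), let `V` be a matrix,
`w ∈ ℝ^n`, `ε ≥ 0` and `c ∈ [0,1)`. If `‖Sg^{-1/2} V w‖₂ ≤ ε` and
`‖Sg^{-1/2} V Sg^{-1/2} - I‖_op ≤ c`, then `‖Sg^{1/2} w‖₂ ≤ ε / (1 - c)`. -/
theorem stmt_12 {n : ℕ} (Sg S V : Matrix (Fin n) (Fin n) ℝ)
    (hSg : Sg.PosDef) (hS : S.PosDef) (hSsq : S * S = Sg)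
    (w : Fin n → ℝ) (ε c : ℝ) (hε : 0 ≤ ε) (hc0 : 0 ≤ c) (hc1 : c < 1)
    (h1 : euclNorm ((S⁻¹ * V).mulVec w) ≤ ε)
    (h2 : opNorm (S⁻¹ * V * S⁻¹ - 1) ≤ c) :
    euclNorm (S.mulVec w) ≤ ε / (1 - c) :=
  stmt_12_general S V hS.isUnit hc1 h1 h2
end
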